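/- arXiv:1309.6931 — 3 statements merged into one kernel-verified Lean document; each statement's English description precedes it below -/
import Mathlib

section
/- For all natural numbers i, j with j ≤ i, the Alpert refinement coefficient has the terminating-hypergeometric representation c_{i,j} = [sqrt((2i+1)(2j+1)) · (i+j)! / (2^j · (2j+1)! · (i−j)!)] · Σ_{k=0}^{i−j} [(j−i)_k · (i+j+1)_k / ((2j+2)_k · k!)] · (1/2)^k. -/
/-!
With `u = (1 - t) / 2`, Rodrigues' formula identifies the Legendre polynomial `P_n(t)` with the
shifted Legendre polynomial `L_n(u) = ∑ (-1)^k C(n,k) C(n+k,n) u^k` (`legendreHat_eq`). The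
substitution `s = 1 - t` therefore turns `∫₀¹ P_i(t) P_j(2t-1) dt` into `∫₀¹ L_i(s/2) L_j(s) ds`.

Expanding `L_i` leaves the moments `∫₀¹ s^m L_j(s) ds`. By Rodrigues and `j` integrations by parts
these vanish for `m < j` and equal `(-1)^j m!² / ((m-j)! (m+j+1)!)` for `m ≥ j` (`moment_lt`,
`moment_add`). Putting `m = j + k` makes the remaining sum, term by term, the terminating
hypergeometric series.
-/

open MeasureTheory

/-- The orthonormal Legendre polynomial of degree `n` on `[-1,1]`,
`p̂_n(t) = sqrt((2n+1)/2) · (1/(2^n n!)) dⁿ/dtⁿ (t²-1)ⁿ`. -/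
noncomputable def legendreHat (n : ℕ) : ℝ → ℝ := fun t =>
  Real.sqrt ((2 * n + 1) / 2) * ((1 : ℝ) / (2 ^ n * n.factorial)) *
    iteratedDeriv n (fun s => (s ^ 2 - 1) ^ n) t

/-- The Alpert refinement coefficients `c_{i,j} = 2∫_0^1 p̂_i(t) p̂_j(2t-1) dt`. -/
noncomputable def alpertC (i j : ℕ) : ℝ :=
  2 * ∫ t in (0:ℝ)..1, legendreHat i t * legendreHat j (2 * t - 1)

/-- The Pochhammer symbol `(a)_k = a(a+1)⋯(a+k-1)`. -/
noncomputable def poch (a : ℝ) (k : ℕ) : ℝ := ∏ m ∈ Finset.range k, (a + m)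

open Polynomial

/-- Integration by parts on `[0,1]` for polynomials. -/
lemma integral_eval_mul_derivative (f g : ℝ[X]) :
    ∫ x in (0:ℝ)..1, f.eval x * (derivative g).eval x =
      f.eval 1 * g.eval 1 - f.eval 0 * g.eval 0 -
        ∫ x in (0:ℝ)..1, (derivative f).eval x * g.eval x :=
  intervalIntegral.integral_mul_deriv_eq_deriv_mul
    (fun x _ => f.hasDerivAt x) (fun x _ => g.hasDerivAt x)
    ((derivative f).continuous.intervalIntegrable _ _)
    ((derivative g).continuous.intervalIntegrable _ _)

lemma integral_eval_mul_iterate_derivative (f g : ℝ[X]) (r : ℕ)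
    (h0 : ∀ k < r, (derivative^[k] g).eval 0 = 0)
    (h1 : ∀ k < r, (derivative^[k] g).eval 1 = 0) :
    ∫ x in (0:ℝ)..1, f.eval x * (derivative^[r] g).eval x =
      (-1) ^ r * ∫ x in (0:ℝ)..1, (derivative^[r] f).eval x * g.eval x := by
  induction r generalizing f with
  | zero => simp
  | succ r ih =>
    rw [Function.iterate_succ_apply', integral_eval_mul_derivative, h0 r (by omega),
      h1 r (by omega), ih (derivative f) (fun k hk => h0 k (by omega))
      (fun k hk => h1 k (by omega)), Function.iterate_succ_apply]
    ring

/-- The Beta integral at natural parameters. -/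
lemma integral_pow_mul_one_sub_pow_nat (a b : ℕ) :
    ∫ x in (0:ℝ)..1, x ^ a * (1 - x) ^ b =
      (a.factorial * b.factorial : ℝ) / (a + b + 1).factorial := by
  induction b generalizing a with
  | zero =>
    have : (a.factorial : ℝ) ≠ 0 := by positivity
    have h2 : (a : ℝ) + 1 ≠ 0 := by positivity
    simp [integral_pow, Nat.factorial_succ]
    field_simp
  | succ b ih =>
    have h := integral_eval_mul_derivative ((1 - X) ^ (b + 1)) (X ^ (a + 1))
    have e1 : ∀ x : ℝ, ((1 - X : ℝ[X]) ^ (b + 1)).eval x *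
        (derivative (X ^ (a + 1) : ℝ[X])).eval x = (a + 1) * (x ^ a * (1 - x) ^ (b + 1)) := by
      intro x
      simp
      ring
    have e2 : ∀ x : ℝ, (derivative ((1 - X : ℝ[X]) ^ (b + 1))).eval x *
        (X ^ (a + 1) : ℝ[X]).eval x = -(b + 1) * (x ^ (a + 1) * (1 - x) ^ b) := by
      intro x
      simp [derivative_pow]
      ring
    simp only [e1, e2, intervalIntegral.integral_const_mul, ih] at h
    simp at h
    have h2 : (a : ℝ) + 1 ≠ 0 := by positivity
    apply mul_left_cancel₀ h2
    rw [h, show a + 1 + b + 1 = a + (b + 1) + 1 by ring, Nat.factorial_succ a,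
      Nat.factorial_succ b]
    push_cast
    ring

/-- The shifted Legendre polynomial with real coefficients. -/
noncomputable def realShiftedLegendre (n : ℕ) : ℝ[X] :=
  (shiftedLegendre n).map (Int.castRingHom ℝ)

lemma eval_realShiftedLegendre (n : ℕ) (x : ℝ) : (realShiftedLegendre n).eval x =
    ∑ k ∈ Finset.range (n + 1), (-1) ^ k * n.choose k * (n + k).choose n * x ^ k := by
  simp [realShiftedLegendre, shiftedLegendre, Polynomial.map_sum, eval_finsetSum]

lemma iterate_derivative_eq (n : ℕ) : derivative^[n] (X ^ n * (1 - (X : ℝ[X])) ^ n) =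
    C (n.factorial : ℝ) * realShiftedLegendre n := by
  have h := congrArg (Polynomial.map (Int.castRingHom ℝ)) (factorial_mul_shiftedLegendre_eq n)
  rw [← Polynomial.iterate_derivative_map] at h
  simpa [realShiftedLegendre] using h.symm

/-- Rodrigues' formula followed by `j` integrations by parts: the boundary terms vanish since
`s^j (1-s)^j` has zeros of order `j` at both endpoints. -/
lemma moment_eq (m j : ℕ) :
    j.factorial * ∫ s in (0:ℝ)..1, s ^ m * (realShiftedLegendre j).eval s =
      (-1) ^ j * (m.descFactorial j *
        ∫ s in (0:ℝ)..1, s ^ (m - j) * (s ^ j * (1 - s) ^ j)) := by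
  have h := integral_eval_mul_iterate_derivative (X ^ m) (X ^ j * (1 - X) ^ j) j ?_ ?_
  · rw [iterate_derivative_eq, iterate_derivative_X_pow_eq_C_mul] at h
    simp only [eval_mul, eval_C, eval_pow, eval_X, eval_sub, eval_one, mul_assoc,
      intervalIntegral.integral_const_mul] at h
    rw [← h, ← intervalIntegral.integral_const_mul]
    congr 1
    ext s
    ring
  · intro k hk
    have hd : (X : ℝ[X]) ^ (j - k) ∣ derivative^[k] (X ^ j * (1 - X) ^ j) :=
      pow_sub_dvd_iterate_derivative_of_pow_dvd k (dvd_mul_right _ _)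
    obtain ⟨q, hq⟩ := hd
    simp [hq, show j - k ≠ 0 by omega]
  · intro k hk
    have hd : (1 - X : ℝ[X]) ^ (j - k) ∣ derivative^[k] (X ^ j * (1 - X) ^ j) :=
      pow_sub_dvd_iterate_derivative_of_pow_dvd k (dvd_mul_left _ _)
    obtain ⟨q, hq⟩ := hd
    simp [hq, show j - k ≠ 0 by omega]

lemma moment_lt {m j : ℕ} (h : m < j) :
    ∫ s in (0:ℝ)..1, s ^ m * (realShiftedLegendre j).eval s = 0 := by
  have h2 := moment_eq m j
  rw [Nat.descFactorial_of_lt h] at h2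
  simpa [Nat.factorial_ne_zero] using h2

lemma moment_add (j k : ℕ) :
    ∫ s in (0:ℝ)..1, s ^ (j + k) * (realShiftedLegendre j).eval s =
      (-1) ^ j * ((j + k).factorial : ℝ) ^ 2 / (k.factorial * (2 * j + 1 + k).factorial) := by
  have h2 := moment_eq (j + k) j
  have hd : (k.factorial : ℝ) * (j + k).descFactorial j = (j + k).factorial := by
    have := Nat.factorial_mul_descFactorial (Nat.le_add_right j k)
    rw [Nat.add_sub_cancel_left] at this
    exact_mod_cast this
  simp only [Nat.add_sub_cancel_left, ← mul_assoc, ← pow_add] at h2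
  rw [integral_pow_mul_one_sub_pow_nat, show k + j + j + 1 = 2 * j + 1 + k by ring,
    add_comm k j] at h2
  have hj : (j.factorial : ℝ) ≠ 0 := by positivity
  have hk : (k.factorial : ℝ) ≠ 0 := by positivity
  apply mul_left_cancel₀ hj
  rw [h2, ← hd]
  field_simp

/-- Each differentiation through the affine substitution `u = (1 - s) / 2` costs `-1/2`. -/
lemma iteratedDeriv_eval_comp (p : ℝ[X]) (n : ℕ) :
    iteratedDeriv n (fun s : ℝ => p.eval ((1 - s) / 2)) =
      fun s => (-1 / 2) ^ n * (derivative^[n] p).eval ((1 - s) / 2) := by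
  induction n with
  | zero => simp
  | succ n ih =>
    rw [iteratedDeriv_succ, ih]
    ext s
    have h1 : HasDerivAt (fun s : ℝ => (1 - s) / 2) (-1 / 2) s :=
      ((hasDerivAt_id s).const_sub 1).div_const 2
    have h2 := (((derivative^[n] p).hasDerivAt ((1 - s) / 2)).comp s h1).const_mul
      ((-1 / 2 : ℝ) ^ n)
    have h3 := h2.deriv
    simp only [Function.comp_def] at h3
    rw [h3, Function.iterate_succ_apply']
    ring

lemma legendreHat_eq (n : ℕ) (t : ℝ) :
    legendreHat n t =
      Real.sqrt ((2 * n + 1) / 2) * (realShiftedLegendre n).eval ((1 - t) / 2) := by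
  -- `s² - 1 = -4 u (1 - u)` for `u = (1 - s) / 2`
  have h : (fun s : ℝ => (s ^ 2 - 1) ^ n) =
      fun s => (C ((-4 : ℝ) ^ n) * (X ^ n * (1 - X) ^ n)).eval ((1 - s) / 2) := by
    ext s
    simp only [eval_mul, eval_C, eval_pow, eval_X, eval_sub, eval_one, ← mul_pow]
    ring
  have hn : (n.factorial : ℝ) ≠ 0 := by positivity
  have h4 : (-1 / 2 : ℝ) ^ n * (-4) ^ n = 2 ^ n := by
    rw [← mul_pow]; norm_num
  rw [legendreHat, h, iteratedDeriv_eval_comp, iterate_derivative_C_mul, iterate_derivative_eq]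
  simp only [eval_mul, eval_C]
  rw [← mul_assoc ((-1 / 2 : ℝ) ^ n), h4]
  field_simp

lemma alpertC_eq (i j : ℕ) :
    alpertC i j = Real.sqrt ((2 * i + 1) * (2 * j + 1)) *
      ∫ s in (0:ℝ)..1, (realShiftedLegendre i).eval (s / 2) * (realShiftedLegendre j).eval s := by
  have hs : 2 * (Real.sqrt ((2 * i + 1) / 2) * Real.sqrt ((2 * j + 1) / 2)) =
      Real.sqrt ((2 * i + 1) * (2 * j + 1)) := by
    rw [← Real.sqrt_mul (by positivity),
      show ((2 * i + 1) * (2 * j + 1) : ℝ) = 2 ^ 2 * ((2 * i + 1) / 2 * ((2 * j + 1) / 2)) by ring,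
      Real.sqrt_mul (by norm_num : (0:ℝ) ≤ 2 ^ 2), Real.sqrt_sq (by norm_num)]
  have hsub := intervalIntegral.integral_comp_sub_left (a := 0) (b := 1)
    (fun s => (realShiftedLegendre i).eval (s / 2) * (realShiftedLegendre j).eval s) (1 : ℝ)
  simp only [sub_zero, sub_self] at hsub
  have hf : ∀ t : ℝ, legendreHat i t * legendreHat j (2 * t - 1) =
      (Real.sqrt ((2 * i + 1) / 2) * Real.sqrt ((2 * j + 1) / 2)) *
        ((realShiftedLegendre i).eval ((1 - t) / 2) * (realShiftedLegendre j).eval (1 - t)) := by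
    intro t
    rw [legendreHat_eq, legendreHat_eq, show (1 - (2 * t - 1)) / 2 = 1 - t by ring]
    ring
  rw [alpertC, ← hs, ← hsub]
  simp only [hf, intervalIntegral.integral_const_mul]
  ring

lemma poch_natCast_succ (a k : ℕ) :
    (a.factorial : ℝ) * poch ((a : ℝ) + 1) k = (a + k).factorial := by
  induction k with
  | zero => simp [poch]
  | succ k ih =>
    rw [poch, Finset.prod_range_succ, ← poch, ← mul_assoc, ih, ← add_assoc, Nat.factorial_succ]
    push_cast
    ring

lemma poch_neg_natCast (d k : ℕ) (h : k ≤ d) :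
    ((d - k).factorial : ℝ) * poch (-(d : ℝ)) k = (-1) ^ k * d.factorial := by
  induction k with
  | zero => simp [poch]
  | succ k ih =>
    have h1 : d - k = (d - (k + 1)) + 1 := by omega
    have h2 : ((d - (k + 1) : ℕ) : ℝ) + 1 = d - k := by
      rw [Nat.cast_sub h]; push_cast; ring
    have h3 := ih (by omega)
    rw [h1, Nat.factorial_succ] at h3
    push_cast at h3
    rw [h2] at h3
    rw [poch, Finset.prod_range_succ, ← poch, pow_succ]
    linear_combination -h3

lemma choose_mul_choose (i m : ℕ) (h : m ≤ i) :
    (i.choose m : ℝ) * (i + m).choose i * (m.factorial : ℝ) ^ 2 =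
      (i + m).factorial / (i - m).factorial := by
  have h1 := Nat.choose_mul_factorial_mul_factorial h
  have h2 := Nat.choose_mul_factorial_mul_factorial (Nat.le_add_right i m)
  rw [Nat.add_sub_cancel_left] at h2
  have hf : ((i - m).factorial : ℝ) ≠ 0 := by positivity
  rw [eq_div_iff hf, ← h2]
  have hi : (i.factorial : ℝ) = i.choose m * m.factorial * (i - m).factorial := by
    exact_mod_cast h1.symm
  push_cast
  rw [hi]
  ring

theorem alpertC_hypergeometric_rep (i j : ℕ) (hij : j ≤ i) :
    alpertC i j =
      Real.sqrt ((2 * i + 1) * (2 * j + 1)) * (i + j).factorial /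
          (2 ^ j * (2 * j + 1).factorial * (i - j).factorial) *
        ∑ k ∈ Finset.range (i - j + 1),
          poch ((j : ℝ) - i) k * poch ((i : ℝ) + j + 1) k /
            (poch (2 * j + 2) k * k.factorial) * (1 / 2) ^ k := by
  obtain ⟨d, rfl⟩ := Nat.exists_eq_add_of_le hij
  rw [alpertC_eq]
  simp only [eval_realShiftedLegendre (j + d), Finset.sum_mul]
  rw [intervalIntegral.integral_finsetSum (fun k _ => by
    apply Continuous.intervalIntegrable
    have := (realShiftedLegendre j).continuous
    fun_prop)]
  have hterm : ∀ m : ℕ, ∫ s in (0:ℝ)..1, (-1) ^ m * ((j + d).choose m : ℝ) *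
        ((j + d + m).choose (j + d) : ℝ) * (s / 2) ^ m * (realShiftedLegendre j).eval s =
      ((-1) ^ m * ((j + d).choose m : ℝ) * ((j + d + m).choose (j + d) : ℝ) * (1 / 2) ^ m) *
        ∫ s in (0:ℝ)..1, s ^ m * (realShiftedLegendre j).eval s := by
    intro m
    rw [← intervalIntegral.integral_const_mul]
    congr 1
    ext s
    rw [div_eq_mul_one_div s, mul_pow]
    ring
  simp only [hterm]
  rw [show j + d + 1 = j + (d + 1) by ring, Finset.sum_range_add,
    Finset.sum_eq_zero (fun m hm => by rw [moment_lt (Finset.mem_range.mp hm), mul_zero]),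
    zero_add, Nat.add_sub_cancel_left, mul_div_assoc, mul_assoc]
  congr 1
  rw [Finset.mul_sum]
  refine Finset.sum_congr rfl fun k hk => ?_
  have hkd : k ≤ d := by have := Finset.mem_range.mp hk; omega
  rw [moment_add]
  have hc := choose_mul_choose (j + d) (j + k) (by omega)
  rw [show j + d - (j + k) = d - k by omega,
    show j + d + (j + k) = j + d + j + k by ring] at hc
  have p1 := poch_neg_natCast d k hkd
  have p2 := poch_natCast_succ (j + d + j) k
  have p3 := poch_natCast_succ (2 * j + 1) k
  rw [show -(d : ℝ) = (j : ℝ) - (j + d : ℕ) by push_cast; ring] at p1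
  rw [show ((j + d + j : ℕ) : ℝ) + 1 = ((j + d : ℕ) : ℝ) + j + 1 by push_cast; ring] at p2
  rw [show ((2 * j + 1 : ℕ) : ℝ) + 1 = 2 * j + 2 by push_cast; ring] at p3
  rw [show j + d + (j + k) = j + d + j + k by ring]
  have f1 : ((d - k).factorial : ℝ) ≠ 0 := by positivity
  have f2 : (d.factorial : ℝ) ≠ 0 := by positivity
  have f3 : ((2 * j + 1).factorial : ℝ) ≠ 0 := by positivity
  have f4 : ((2 * j + 1 + k).factorial : ℝ) ≠ 0 := by positivity
  have f5 : (k.factorial : ℝ) ≠ 0 := by positivity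
  have f6 : poch (2 * j + 2) k ≠ 0 := by
    intro h
    rw [h, mul_zero] at p3
    exact f4 p3.symm
  have q1 : poch ((j : ℝ) - (j + d : ℕ)) k = (-1) ^ k * d.factorial / (d - k).factorial := by
    rw [eq_div_iff f1, ← p1, mul_comm]
  have hsgn : (-1 : ℝ) ^ (j + k) * (-1) ^ j = (-1) ^ k := by
    rw [pow_add, mul_right_comm, ← mul_pow]; norm_num
  calc _ = ((-1 : ℝ) ^ (j + k) * (-1) ^ j) * (((j + d).choose (j + k) : ℝ) *
          ((j + d + j + k).choose (j + d) : ℝ) * ((j + k).factorial : ℝ) ^ 2) *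
          (1 / 2) ^ (j + k) / (k.factorial * (2 * j + 1 + k).factorial) := by ring
    _ = _ := by
      rw [hc, hsgn, q1, ← p2, ← p3, pow_add, one_div_pow, one_div_pow]
      generalize poch (2 * (j : ℝ) + 2) k = z at f6
      field_simp
end

section
/- For all natural numbers i, j with j ≤ i, the Alpert refinement coefficient has the alternative terminating-hypergeometric representation c_{i,j} = (−1)^{i−j} · [sqrt((2i+1)(2j+1)) · (2i)! / (2^i · (i+j+1)! · (i−j)!)] · Σ_{k=0}^{i−j} [(j−i)_k · (−i−j−1)_k / ((−2i)_k · k!)] · 2^k. -/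
/-!
The polynomial `P_i` is expanded around the right endpoint `t = 1`: writing
`(t² - 1)^i = (t - 1)^i ((t - 1) + 2)^i` and differentiating the binomial expansion `i` times gives
`P_i(t) = ∑ m, C(i,m) C(i+m,m) ((t - 1)/2)^m` (`rodrigues_expansion`). By Rodrigues' formula,
`P_j(2t - 1) = (1/j!) (d/dt)^j (t^j (t - 1)^j)` (`rodrigues_shifted`), so integrating by parts `j`
times reduces each moment `∫₀¹ (t - 1)^m P_j(2t - 1) dt` to a Beta integral
(`integral_sub_one_pow_mul_rodrigues`); it equals `(-1)^(m+j) (m!)² / ((m-j)! (m+j+1)!)` for `j ≤ m`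
and vanishes for `m < j`. Reading the resulting sum from its top term, `m = i - k`, and rewriting
factorial quotients as Pochhammer symbols at negative integers (`poch_neg_mul_factorial`) yields
the terminating hypergeometric sum term by term.
-/

open MeasureTheory

open Polynomial in
theorem iteratedDeriv_polynomial_eval (p : ℝ[X]) (n : ℕ) :
    iteratedDeriv n (fun x => p.eval x) = fun x => (derivative^[n] p).eval x := by
  induction n with
  | zero => simp
  | succ n ih =>
    rw [iteratedDeriv_succ, ih, Function.iterate_succ_apply']
    funext x
    exact Polynomial.deriv _

open Polynomial in
theorem rodrigues_expansion (n : ℕ) (t : ℝ) :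
    iteratedDeriv n (fun s : ℝ => (s ^ 2 - 1) ^ n) t =
      ∑ m ∈ Finset.range (n + 1),
        (n.choose m : ℝ) * 2 ^ (n - m) * ((n + m).descFactorial n) * (t - 1) ^ m := by
  have h : (fun s : ℝ => (s ^ 2 - 1) ^ n) = fun s => Polynomial.eval s
      (∑ m ∈ Finset.range (n + 1), C ((n.choose m : ℝ) * 2 ^ (n - m)) * (X - C 1) ^ (n + m)) := by
    funext s
    have : (s ^ 2 - 1) ^ n = (s - 1) ^ n * ((s - 1) + 2) ^ n := by
      rw [← mul_pow]; ring
    rw [this, add_pow, Finset.mul_sum, eval_finsetSum]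
    refine Finset.sum_congr rfl fun m _ => ?_
    simp only [eval_mul, eval_C, eval_pow, eval_sub, eval_X, pow_add]
    ring
  rw [h, iteratedDeriv_polynomial_eval]
  simp only [iterate_derivative_sum, iterate_derivative_C_mul, iterate_derivative_X_sub_pow]
  rw [eval_finsetSum]
  refine Finset.sum_congr rfl fun m _ => ?_
  simp
  ring

open Polynomial in
theorem rodrigues_shifted (n : ℕ) (t : ℝ) :
    iteratedDeriv n (fun s : ℝ => (s ^ 2 - 1) ^ n) (2 * t - 1) =
      2 ^ n * (derivative^[n] (X ^ n * (X - C 1) ^ n : ℝ[X])).eval t := by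
  have hc : ContDiff ℝ n (fun s : ℝ => ((s - 1) ^ 2 - 1) ^ n) := by fun_prop
  have h1 := congrFun (iteratedDeriv_comp_const_mul hc 2) t
  have h2 := congrFun (iteratedDeriv_comp_sub_const n (fun s : ℝ => (s ^ 2 - 1) ^ n) 1) (2 * t)
  have h3 : (fun x : ℝ => ((2 * x - 1) ^ 2 - 1) ^ n) =
      fun x => (C ((4 : ℝ) ^ n) * (X ^ n * (X - C 1) ^ n)).eval x := by
    funext x
    simp only [eval_mul, eval_C, eval_pow, eval_sub, eval_X]
    rw [← mul_pow, ← mul_pow]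
    ring
  rw [h2, h3, iteratedDeriv_polynomial_eval, iterate_derivative_C_mul] at h1
  simp only [eval_mul, eval_C] at h1
  have h4 : (4 : ℝ) ^ n = 2 ^ n * 2 ^ n := by rw [← mul_pow]; norm_num
  rw [h4, mul_assoc] at h1
  exact (mul_left_cancel₀ (by positivity) h1).symm

/-- Beta integral at natural parameters, by repeated integration by parts. -/
theorem integral_sub_one_pow_mul_pow (a b : ℕ) :
    ∫ t in (0:ℝ)..1, (t - 1) ^ a * t ^ b =
      (-1) ^ a * a.factorial * b.factorial / (a + b + 1).factorial := by
  induction a generalizing b with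
  | zero =>
    simp [integral_pow, Nat.factorial_succ]
    field_simp
  | succ a ih =>
    have hu : ∀ x ∈ Set.uIcc (0:ℝ) 1,
        HasDerivAt (fun t : ℝ => (t - 1) ^ (a + 1)) ((a + 1) * (x - 1) ^ a) x := by
      intro x _
      simpa using ((hasDerivAt_id' x).sub_const 1).fun_pow (a + 1)
    have hv : ∀ x ∈ Set.uIcc (0:ℝ) 1,
        HasDerivAt (fun t : ℝ => t ^ (b + 1) / (b + 1)) (x ^ b) x := by
      intro x _
      refine ((hasDerivAt_pow (b + 1) x).div_const ((b : ℝ) + 1)).congr_deriv ?_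
      have : (b : ℝ) + 1 ≠ 0 := by positivity
      rw [div_eq_iff this]
      push_cast
      simp [mul_comm]
    rw [intervalIntegral.integral_mul_deriv_eq_deriv_mul hu hv
      (Continuous.intervalIntegrable (by fun_prop) _ _)
      (Continuous.intervalIntegrable (by fun_prop) _ _)]
    have h : (fun x : ℝ => (a + 1) * (x - 1) ^ a * (x ^ (b + 1) / (b + 1))) =
        fun x => ((a + 1) / (b + 1) : ℝ) * ((x - 1) ^ a * x ^ (b + 1)) := by
      funext x; ring
    rw [h, intervalIntegral.integral_const_mul, ih, Nat.factorial_succ b, Nat.factorial_succ a,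
      show a + (b + 1) + 1 = a + 1 + b + 1 by ring]
    push_cast
    simp
    field_simp
    ring

open Polynomial in
/-- Moving `r ≤ n` derivatives off `t^n (t-1)^n`. No boundary terms appear, since each intermediate
derivative still vanishes at both endpoints. For `m < r` both sides are zero because the descending
factorial is. -/
theorem integral_sub_one_pow_mul_iterate_derivative (n r : ℕ) (hr : r ≤ n) (m : ℕ) :
    ∫ t in (0:ℝ)..1, (t - 1) ^ m * (derivative^[r] (X ^ n * (X - C 1) ^ n : ℝ[X])).eval t =
      (-1) ^ r * m.descFactorial r *
        ∫ t in (0:ℝ)..1, (t - 1) ^ (m - r) * (t ^ n * (t - 1) ^ n) := by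
  induction r generalizing m with
  | zero => simp
  | succ r ih =>
    set g : ℝ[X] := X ^ n * (X - C 1) ^ n with hg
    have h0 : (derivative^[r] g).eval 0 = 0 := by
      have h : (X : ℝ[X]) ^ (n - r) ∣ derivative^[r] g :=
        pow_sub_dvd_iterate_derivative_of_pow_dvd r (Dvd.intro _ rfl)
      have h' : (X : ℝ[X]) ∣ derivative^[r] g := (dvd_pow_self _ (by omega)).trans h
      obtain ⟨q, hq⟩ := h'
      simp [hq]
    have h1 : (derivative^[r] g).eval 1 = 0 := by
      have h : (X - C 1 : ℝ[X]) ^ (n - r) ∣ derivative^[r] g :=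
        pow_sub_dvd_iterate_derivative_of_pow_dvd r (Dvd.intro_left _ rfl)
      have h' : (X - C 1 : ℝ[X]) ∣ derivative^[r] g := (dvd_pow_self _ (by omega)).trans h
      obtain ⟨q, hq⟩ := h'
      simp [hq]
    have hu : ∀ x ∈ Set.uIcc (0:ℝ) 1,
        HasDerivAt (fun t : ℝ => (t - 1) ^ m) (m * (x - 1) ^ (m - 1)) x := by
      intro x _
      simpa using ((hasDerivAt_id' x).sub_const 1).fun_pow m
    have hv : ∀ x ∈ Set.uIcc (0:ℝ) 1,
        HasDerivAt (fun t : ℝ => (derivative^[r] g).eval t)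
          ((derivative^[r + 1] g).eval x) x := by
      intro x _
      rw [Function.iterate_succ_apply']
      exact Polynomial.hasDerivAt _ x
    rw [intervalIntegral.integral_mul_deriv_eq_deriv_mul hu hv
      (Continuous.intervalIntegrable (by fun_prop) _ _)
      (Continuous.intervalIntegrable (by fun_prop) _ _), h0, h1]
    simp only [mul_assoc, intervalIntegral.integral_const_mul]
    rw [ih (by omega) (m - 1)]
    have hd : (m : ℝ) * ((m - 1).descFactorial r) = m.descFactorial (r + 1) := by
      cases m with
      | zero => simp
      | succ m => rw [Nat.succ_descFactorial_succ]; push_cast; simp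
    rw [← hd, show m - (r + 1) = m - 1 - r by omega]
    ring

open Polynomial in
theorem integral_sub_one_pow_mul_rodrigues (n m : ℕ) :
    ∫ t in (0:ℝ)..1, (t - 1) ^ m * (derivative^[n] (X ^ n * (X - C 1) ^ n : ℝ[X])).eval t =
      (-1) ^ (n + m) * m.descFactorial n * m.factorial * n.factorial /
        (m + n + 1).factorial := by
  rw [integral_sub_one_pow_mul_iterate_derivative n n le_rfl]
  rcases lt_or_ge m n with h | h
  · simp [Nat.descFactorial_of_lt h]
  · have : (fun t : ℝ => (t - 1) ^ (m - n) * (t ^ n * (t - 1) ^ n)) =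
        fun t => (t - 1) ^ m * t ^ n := by
      funext t
      rw [mul_comm (t ^ n), ← mul_assoc, ← pow_add, Nat.sub_add_cancel h]
    rw [this, integral_sub_one_pow_mul_pow]
    ring

theorem poch_neg_mul_factorial (N k : ℕ) (hk : k ≤ N) :
    poch (-(N : ℝ)) k * (N - k).factorial = (-1) ^ k * N.factorial := by
  induction k with
  | zero => simp [poch]
  | succ k ih =>
    have h := ih (by omega)
    have hf : (N - k).factorial = (N - k) * (N - (k + 1)).factorial := by
      rw [show N - k = (N - (k + 1)) + 1 by omega, Nat.factorial_succ]
    rw [hf] at h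
    push_cast [Nat.cast_sub (show k ≤ N by omega)] at h
    unfold poch at h ⊢
    rw [Finset.prod_range_succ]
    linear_combination -h

/-- The `k`-th hypergeometric term equals the contribution of the power `(t - 1)^(i-k)`. -/
theorem alpert_term (i j k : ℕ) (h : j + k ≤ i) :
    (1 / (2 ^ i * i.factorial : ℝ)) * (1 / (2 ^ j * j.factorial)) * 2 ^ j *
        ((i.choose (i - k) : ℝ) * 2 ^ (i - (i - k)) * ((i + (i - k)).descFactorial i) *
          ((-1) ^ (j + (i - k)) * (i - k).descFactorial j * (i - k).factorial * j.factorial /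
            ((i - k) + j + 1).factorial)) =
      (-1 : ℝ) ^ (i - j) *
        ((2 * i).factorial / (2 ^ i * (i + j + 1).factorial * (i - j).factorial)) *
        (poch ((j : ℝ) - i) k * poch (-(i : ℝ) - j - 1) k /
            (poch (-2 * i) k * k.factorial) * 2 ^ k) := by
  obtain ⟨d, rfl⟩ := Nat.exists_eq_add_of_le h
  have p1 := poch_neg_mul_factorial (k + d) k (by omega)
  have p2 := poch_neg_mul_factorial (j + k + d + j + 1) k (by omega)
  have p3 := poch_neg_mul_factorial (2 * (j + k + d)) k (by omega)
  rw [show k + d - k = d by omega] at p1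
  rw [show j + k + d + j + 1 - k = j + d + j + 1 by omega] at p2
  rw [show 2 * (j + k + d) - k = j + k + d + (j + d) by omega] at p3
  rw [show j + k + d - k = j + d by omega, show j + k + d - (j + d) = k by omega,
    show j + k + d - j = k + d by omega,
    show ((j : ℝ) - ((j + k + d : ℕ) : ℝ)) = -((k + d : ℕ) : ℝ) by push_cast; ring,
    show (-((j + k + d : ℕ) : ℝ) - j - 1) = -((j + k + d + j + 1 : ℕ) : ℝ) by push_cast; ring,
    show (-2 * ((j + k + d : ℕ) : ℝ)) = -((2 * (j + k + d) : ℕ) : ℝ) by push_cast; ring]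
  rw [← eq_div_iff (by positivity)] at p1 p2 p3
  rw [p1, p2, p3]
  have c1 : ((j + k + d).choose (j + d) : ℝ) =
      (j + k + d).factorial / ((j + d).factorial * k.factorial) := by
    rw [Nat.cast_choose ℝ (by omega), show j + k + d - (j + d) = k by omega]
  have c2 : ((j + k + d + (j + d)).descFactorial (j + k + d) : ℝ) =
      (j + k + d + (j + d)).factorial / (j + d).factorial := by
    have := Nat.factorial_mul_descFactorial (show j + k + d ≤ j + k + d + (j + d) by omega)
    rw [show j + k + d + (j + d) - (j + k + d) = j + d by omega] at this
    rw [eq_div_iff (by positivity), ← this]; push_cast; ring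
  have c3 : ((j + d).descFactorial j : ℝ) = (j + d).factorial / d.factorial := by
    have := Nat.factorial_mul_descFactorial (show j ≤ j + d by omega)
    rw [show j + d - j = d by omega] at this
    rw [eq_div_iff (by positivity), ← this]; push_cast; ring
  have s1 : (-1 : ℝ) ^ (j + (j + d)) = (-1) ^ d := by
    rw [← add_assoc, pow_add, ← two_mul, pow_mul]; simp
  have s2 : (-1 : ℝ) ^ k * (-1) ^ k = 1 := by rw [← mul_pow]; simp
  have s3 : (-1 : ℝ) ^ k ≠ 0 := by simp
  rw [c1, c2, c3, s1, pow_add (-1 : ℝ) k d]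
  have hk : ((-1 : ℝ) ^ k) ^ 2 = 1 := by rw [sq, s2]
  field_simp
  rw [hk]

theorem alpertC_hypergeometric_rep' (i j : ℕ) (hij : j ≤ i) :
    alpertC i j =
      (-1 : ℝ) ^ (i - j) *
        (Real.sqrt ((2 * i + 1) * (2 * j + 1)) * (2 * i).factorial /
          (2 ^ i * (i + j + 1).factorial * (i - j).factorial)) *
        ∑ k ∈ Finset.range (i - j + 1),
          poch ((j : ℝ) - i) k * poch (-(i : ℝ) - j - 1) k /
            (poch (-2 * i) k * k.factorial) * 2 ^ k := by
  have hsum : (∫ t in (0:ℝ)..1, legendreHat i t * legendreHat j (2 * t - 1)) =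
      Real.sqrt ((2 * i + 1) / 2) * Real.sqrt ((2 * j + 1) / 2) *
        ∑ m ∈ Finset.range (i + 1),
          (1 / (2 ^ i * i.factorial : ℝ)) * (1 / (2 ^ j * j.factorial)) * 2 ^ j *
          ((i.choose m : ℝ) * 2 ^ (i - m) * ((i + m).descFactorial i) *
          ((-1) ^ (j + m) * m.descFactorial j * m.factorial * j.factorial /
            (m + j + 1).factorial)) := by
    simp only [← integral_sub_one_pow_mul_rodrigues, ← intervalIntegral.integral_const_mul]
    rw [← intervalIntegral.integral_finsetSum
      (fun m _ => Continuous.intervalIntegrable (by fun_prop) _ _),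
      ← intervalIntegral.integral_const_mul]
    congr 1
    funext t
    simp only [legendreHat, rodrigues_expansion i t, rodrigues_shifted j t]
    rw [Finset.mul_sum, Finset.sum_mul, Finset.mul_sum]
    refine Finset.sum_congr rfl fun m _ => ?_
    ring
  have hs : Real.sqrt ((2 * i + 1) * (2 * j + 1)) =
      2 * (Real.sqrt ((2 * i + 1) / 2) * Real.sqrt ((2 * j + 1) / 2)) := by
    rw [← Real.sqrt_mul (by positivity),
      show ((2 * i + 1) * (2 * j + 1) : ℝ) = 2 ^ 2 * ((2 * i + 1) / 2 * ((2 * j + 1) / 2)) by ring,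
      Real.sqrt_mul (by positivity), Real.sqrt_sq (by norm_num)]
  rw [alpertC, hsum, hs, ← Finset.sum_range_reflect]
  -- The powers `(t - 1)^m` with `m < j`, i.e. `k > i - j`, contribute nothing.
  rw [← Finset.sum_subset (Finset.range_mono (show i - j + 1 ≤ i + 1 by omega))]
  · simp only [Finset.mul_sum]
    refine Finset.sum_congr rfl fun k hk => ?_
    have hk' := Finset.mem_range.mp hk
    have := alpert_term i j k (by omega)
    rw [show i + 1 - 1 - k = i - k by omega, this]
    ring
  · intro k hk hk'
    simp only [Finset.mem_range] at hk hk'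
    rw [Nat.descFactorial_of_lt (show i + 1 - 1 - k < j by omega)]
    simp
end

section
/- For all natural numbers i, j with j ≤ i, the even-even monic Legendre refinement integral has the balanced ₄F₃ representation I_{2i,2j} = 2^{2j−1} · [(−i)_j (−i+1/2)_j (2j)! / ((i+1/2)_{j+1} (i+1)_j (2j+1)_{2j})] · Σ_{k=0}^{i−j} [(−(i−j))_k (−i+j+1/2)_k (−i−j−1/2)_k (−i−j)_k] / [(−2i+1/2)_k (−i)_k (−i+1/2)_k k!]. -/
/-!
The even Legendre polynomial expands in powers as
`p_{2i}(t) = ∑_k (-i)_k (-i+1/2)_k / ((-2i+1/2)_k k!) t^{2i-2k}`, and integrating by parts `n` times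
against Rodrigues' formula for `p_n(2t-1)` reduces its moments to a Beta integral:
`∫_0^1 t^m p_n(2t-1) dt = 2^n (n!)²/(2n)! · m(m-1)⋯(m-n+1) / ((m+1)⋯(m+n+1))`.
Integrating the expansion term by term, the terms with `2i-2k < 2j` vanish. The others agree one
by one with the terms of the claimed series, once the products in the moment with `m = 2(i-k)` are
split into even and odd factors (`descFactorial_two_mul`, `factorial_two_mul`) and the resulting
Pochhammer symbols at points shifted by `k` are rewritten with `poch_shift` and `poch_reflect`.
-/

open MeasureTheory

/-- The monic Legendre polynomial of degree `n`,
`p_n(t) = (n!/(2n)!) dⁿ/dtⁿ (t²-1)ⁿ`. -/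
noncomputable def legendreMonic (n : ℕ) : ℝ → ℝ := fun t =>
  ((n.factorial : ℝ) / (2 * n).factorial) * iteratedDeriv n (fun s => (s ^ 2 - 1) ^ n) t

/-- The monic Legendre refinement integral `I_{i,j} = ∫_0^1 p_i(t) p_j(2t-1) dt`. -/
noncomputable def alpertI (i j : ℕ) : ℝ :=
  ∫ t in (0:ℝ)..1, legendreMonic i t * legendreMonic j (2 * t - 1)

open Polynomial

/-! ### Pochhammer symbols -/

lemma poch_zero (a : ℝ) : poch a 0 = 1 := by simp [poch]

lemma poch_succ (a : ℝ) (k : ℕ) : poch a (k + 1) = poch a k * (a + k) := by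
  simp [poch, Finset.prod_range_succ]

lemma poch_succ_left (a : ℝ) (k : ℕ) : poch a (k + 1) = a * poch (a + 1) k := by
  simp only [poch, Finset.prod_range_succ', Nat.cast_zero, add_zero]
  rw [mul_comm]
  congr 1
  exact Finset.prod_congr rfl fun m _ => by push_cast; ring

lemma poch_add (a : ℝ) (j k : ℕ) : poch a (j + k) = poch a j * poch (a + j) k := by
  induction k with
  | zero => simp [poch_zero]
  | succ k ih => rw [← add_assoc, poch_succ, poch_succ, ih]; push_cast; ring

lemma poch_shift (x : ℝ) (j k : ℕ) :
    poch (x + k) j * poch x k = poch x j * poch (x + j) k := by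
  rw [← poch_add, add_comm j k, poch_add, mul_comm]

lemma poch_reflect (a : ℝ) (n k : ℕ) :
    poch (a - k) n * poch (1 - a - n) k = poch a n * poch (1 - a) k := by
  induction k with
  | zero => simp [poch_zero]
  | succ k ih =>
    have h : poch (a - k - 1) n * (a - k - 1 + n) = (a - k - 1) * poch (a - k) n := by
      rw [← poch_succ, poch_succ_left]; ring_nf
    rw [poch_succ, poch_succ]
    push_cast
    rw [show a - ((k : ℝ) + 1) = a - k - 1 by ring]
    linear_combination (-poch (1 - a - n) k) * h + (1 - a + k) * ih

lemma poch_ne_zero_of {a : ℝ} {k : ℕ} (h : ∀ m < k, a + m ≠ 0) : poch a k ≠ 0 :=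
  Finset.prod_ne_zero_iff.2 fun m hm => h m (Finset.mem_range.1 hm)

lemma poch_half_ne_zero (z : ℤ) (k : ℕ) : poch ((z : ℝ) + 1 / 2) k ≠ 0 := by
  refine poch_ne_zero_of fun m _ h => ?_
  have h2 : ((2 * z + 1 + 2 * m : ℤ) : ℝ) = (0 : ℤ) := by push_cast; linarith
  have := Int.cast_injective h2
  omega

lemma poch_neg_ne_zero {n k : ℕ} (h : k ≤ n) : poch (-(n : ℝ)) k ≠ 0 := by
  refine poch_ne_zero_of fun m hm h0 => ?_
  have : (m : ℝ) = n := by linarith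
  have := Nat.cast_injective this
  omega

lemma poch_pos {a : ℝ} (ha : 0 < a) (k : ℕ) : 0 < poch a k :=
  Finset.prod_pos fun m _ => by positivity

lemma descFactorial_eq_poch (n k : ℕ) (h : k ≤ n) :
    (n.descFactorial k : ℝ) = (-1) ^ k * poch (-(n : ℝ)) k := by
  induction k with
  | zero => simp [poch_zero]
  | succ k ih =>
    rw [Nat.descFactorial_succ, poch_succ, Nat.cast_mul, ih (by omega), Nat.cast_sub (by omega)]
    ring

lemma descFactorial_two_mul (a j : ℕ) (h : j ≤ a) :
    ((2 * a).descFactorial (2 * j) : ℝ) =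
      4 ^ j * poch (-(a : ℝ)) j * poch (-(a : ℝ) + 1 / 2) j := by
  induction j with
  | zero => simp [poch_zero]
  | succ k ih =>
    rw [show 2 * (k + 1) = 2 * k + 1 + 1 by ring, Nat.descFactorial_succ, Nat.descFactorial_succ,
      poch_succ, poch_succ, Nat.cast_mul, Nat.cast_mul, ih (by omega), Nat.cast_sub (by omega),
      Nat.cast_sub (by omega)]
    push_cast
    ring

lemma factorial_two_mul (a j : ℕ) :
    ((2 * a + 2 * j + 1).factorial : ℝ) =
      (2 * a).factorial * (2 ^ (2 * j + 1) * poch ((a : ℝ) + 1 / 2) (j + 1) *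
        poch ((a : ℝ) + 1) j) := by
  induction j with
  | zero =>
    simp only [mul_zero, add_zero, Nat.factorial_succ, poch_succ, poch_zero]
    push_cast
    ring
  | succ k ih =>
    rw [show 2 * a + 2 * (k + 1) + 1 = 2 * a + 2 * k + 1 + 1 + 1 by ring, Nat.factorial_succ,
      Nat.factorial_succ, poch_succ _ (k + 1), poch_succ ((a : ℝ) + 1) k, Nat.cast_mul,
      Nat.cast_mul, ih]
    push_cast
    ring

lemma factorial_eq_poch (n k : ℕ) :
    ((n + k).factorial : ℝ) = n.factorial * poch ((n : ℝ) + 1) k := by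
  induction k with
  | zero => simp [poch_zero]
  | succ k ih =>
    rw [← add_assoc, Nat.factorial_succ, poch_succ, Nat.cast_mul, ih]
    push_cast
    ring

/-! ### Power expansion of the even Legendre polynomials -/

lemma iteratedDeriv_polynomial (p : ℝ[X]) (n : ℕ) :
    iteratedDeriv n (fun s => p.eval s) = fun s => (derivative^[n] p).eval s := by
  induction n with
  | zero => simp
  | succ n ih =>
    rw [iteratedDeriv_succ, ih, Function.iterate_succ_apply']
    funext s
    exact Polynomial.deriv _

lemma legendreMonic_eq_eval (n : ℕ) (t : ℝ) :
    legendreMonic n t = ((n.factorial : ℝ) / (2 * n).factorial) *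
      (derivative^[n] ((X ^ 2 - 1 : ℝ[X]) ^ n)).eval t := by
  have h : (fun s : ℝ => (s ^ 2 - 1) ^ n) = fun s => ((X ^ 2 - 1 : ℝ[X]) ^ n).eval s := by
    funext s; simp
  rw [legendreMonic, h, iteratedDeriv_polynomial]

/-- The coefficient of `t^(2i-2k)` in the monic Legendre polynomial of degree `2i`. -/
noncomputable def legCoeff (i k : ℕ) : ℝ :=
  poch (-(i : ℝ)) k * poch (-(i : ℝ) + 1 / 2) k / (poch (-2 * i + 1 / 2) k * k.factorial)

lemma cast_descFactorial (n k : ℕ) (h : k ≤ n) :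
    (n.descFactorial k : ℝ) = n.factorial / (n - k).factorial := by
  rw [eq_div_iff (by positivity), mul_comm]
  exact_mod_cast Nat.factorial_mul_descFactorial h

lemma rodrigues_coeff (i k : ℕ) (h : k ≤ i) :
    ((2 * i).factorial : ℝ) / (2 * (2 * i)).factorial *
      ((-1) ^ k * ((2 * i).choose k : ℝ) * ((2 * (2 * i - k)).descFactorial (2 * i) : ℝ)) =
    legCoeff i k := by
  have h1 := descFactorial_two_mul i k h
  have h2 := descFactorial_two_mul (2 * i) k (by omega)
  have h3 := descFactorial_eq_poch (2 * i) k (by omega)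
  have h4 : ((2 * i).descFactorial k : ℝ) = k.factorial * (2 * i).choose k := by
    exact_mod_cast Nat.descFactorial_eq_factorial_mul_choose _ _
  rw [cast_descFactorial _ _ (by omega), div_eq_iff (by positivity)] at h1 h2
  rw [cast_descFactorial _ _ (by omega)]
  rw [show 2 * (2 * i - k) - 2 * i = 2 * i - 2 * k by omega,
    show 2 * (2 * i - k) = 2 * (2 * i) - 2 * k by omega, h1, h2]
  have h5 : ((2 * i).choose k : ℝ) = (-1) ^ k * poch (-((2 * i : ℕ) : ℝ)) k / k.factorial := by
    rw [eq_div_iff (by positivity), ← h3, h4]; ring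
  rw [h5, legCoeff]
  have n1 : poch (-((2 * i : ℕ) : ℝ)) k ≠ 0 := poch_neg_ne_zero (by omega)
  have n2 : poch (-2 * (i : ℝ) + 1 / 2) k ≠ 0 := by
    simpa using poch_half_ne_zero (-2 * (i : ℤ)) k
  have e : (-((2 * i : ℕ) : ℝ) + 1 / 2) = -2 * (i : ℝ) + 1 / 2 := by push_cast; ring
  rw [e]
  have s : ((-1 : ℝ) ^ k) * (-1) ^ k = 1 := by rw [← mul_pow]; simp
  have f1 : ((2 * i - 2 * k).factorial : ℝ) ≠ 0 := by positivity
  have f2 : ((2 * (2 * i) - 2 * k).factorial : ℝ) ≠ 0 := by positivity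
  have f3 : (k.factorial : ℝ) ≠ 0 := by positivity
  generalize poch (-((2 * i : ℕ) : ℝ)) k = A at *
  generalize poch (-2 * (i : ℝ) + 1 / 2) k = B at *
  generalize poch (-(i : ℝ) + 1 / 2) k = D at *
  field_simp
  linear_combination poch (-(i : ℝ)) k * D * s

lemma legendreMonic_even (i : ℕ) (t : ℝ) :
    legendreMonic (2 * i) t = ∑ k ∈ Finset.range (i + 1), legCoeff i k * t ^ (2 * (i - k)) := by
  have h : ((X ^ 2 - 1 : ℝ[X]) ^ (2 * i)) = ∑ k ∈ Finset.range (2 * i + 1),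
      C ((-1) ^ k * ((2 * i).choose k : ℝ)) * X ^ (2 * (2 * i - k)) := by
    rw [show (X ^ 2 - 1 : ℝ[X]) = -1 + X ^ 2 by ring, add_pow]
    refine Finset.sum_congr rfl fun k _ => ?_
    rw [pow_mul]
    simp
    ring
  rw [legendreMonic_eq_eval, h, iterate_derivative_sum, eval_finsetSum, Finset.mul_sum]
  symm
  refine Finset.sum_subset_zero_on_sdiff (Finset.range_mono (by omega)) ?_ ?_
  · intro k hk
    simp only [Finset.mem_sdiff, Finset.mem_range] at hk
    rw [iterate_derivative_C_mul, iterate_derivative_X_pow_eq_C_mul,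
      Nat.descFactorial_eq_zero_iff_lt.2 (by omega)]
    simp
  · intro k hk
    have hk' : k ≤ i := by simpa [Nat.lt_succ_iff] using hk
    rw [← rodrigues_coeff i k hk', iterate_derivative_C_mul, iterate_derivative_X_pow_eq_C_mul,
      show 2 * (2 * i - k) - 2 * i = 2 * (i - k) by omega]
    simp only [eval_mul, eval_C, eval_pow, eval_X]
    ring

/-! ### Moments of the shifted Legendre polynomials -/

lemma integral_pow_mul_one_sub_pow (m n : ℕ) :
    ∫ t in (0 : ℝ)..1, t ^ m * (1 - t) ^ n =
      (m.factorial : ℝ) * n.factorial / (m + n + 1).factorial := by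
  induction n generalizing m with
  | zero =>
    simp [Nat.factorial_succ]
    field_simp
  | succ n ih =>
    have h : (fun t : ℝ => t ^ m * (1 - t) ^ (n + 1)) =
        fun t => t ^ m * (1 - t) ^ n - t ^ (m + 1) * (1 - t) ^ n := by
      funext t; ring
    rw [h, intervalIntegral.integral_sub
      (Continuous.intervalIntegrable (by fun_prop) _ _)
      (Continuous.intervalIntegrable (by fun_prop) _ _), ih, ih,
      show m + 1 + n + 1 = m + n + 1 + 1 by ring, show m + (n + 1) + 1 = m + n + 1 + 1 by ring,
      Nat.factorial_succ (m + n + 1), Nat.factorial_succ m, Nat.factorial_succ n]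
    push_cast
    field_simp
    ring

lemma integral_mul_iterate_derivative (w : ℝ[X]) (n : ℕ)
    (h0 : ∀ l < n, (derivative^[l] w).eval 0 = 0) (h1 : ∀ l < n, (derivative^[l] w).eval 1 = 0)
    (q : ℝ[X]) :
    ∫ t in (0 : ℝ)..1, q.eval t * (derivative^[n] w).eval t =
      (-1) ^ n * ∫ t in (0 : ℝ)..1, (derivative^[n] q).eval t * w.eval t := by
  induction n generalizing q with
  | zero => simp
  | succ n ih =>
    have hp := intervalIntegral.integral_mul_deriv_eq_deriv_mul (a := (0 : ℝ)) (b := 1)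
      (u := fun t => q.eval t) (v := fun t => (derivative^[n] w).eval t)
      (fun x _ => q.hasDerivAt x) (fun x _ => (derivative^[n] w).hasDerivAt x)
      (Continuous.intervalIntegrable (by fun_prop) _ _)
      (Continuous.intervalIntegrable (by fun_prop) _ _)
    simp only [h0 n (by omega), h1 n (by omega)] at hp
    rw [Function.iterate_succ_apply', hp,
      ih (fun l hl => h0 l (by omega)) (fun l hl => h1 l (by omega)),
      Function.iterate_succ_apply]
    ring

lemma iterate_derivative_comp_linear (p : ℝ[X]) (n : ℕ) :
    derivative^[n] (p.comp (2 * X - 1)) = 2 ^ n * (derivative^[n] p).comp (2 * X - 1) := by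
  induction n generalizing p with
  | zero => simp
  | succ n ih =>
    have hd : derivative (p.comp (2 * X - 1)) = C 2 * (derivative p).comp (2 * X - 1) := by
      rw [derivative_comp, show (C (2 : ℝ) : ℝ[X]) = 2 from map_ofNat C 2]; simp
    rw [Function.iterate_succ_apply, hd, iterate_derivative_C_mul, ih, Function.iterate_succ_apply]
    simp only [map_ofNat]
    ring

/-- Rodrigues' formula for the Legendre polynomial shifted to `[0, 1]`. -/
lemma legendreMonic_shifted (n : ℕ) (t : ℝ) :
    legendreMonic n (2 * t - 1) = ((n.factorial : ℝ) / (2 * n).factorial) * 2 ^ n *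
      (derivative^[n] ((X * (X - 1) : ℝ[X]) ^ n)).eval t := by
  have hw : ((X ^ 2 - 1 : ℝ[X]) ^ n).comp (2 * X - 1) = C (4 ^ n) * (X * (X - 1)) ^ n := by
    simp only [pow_comp, sub_comp, X_comp, one_comp, map_pow, ← mul_pow]
    congr 1
    rw [show (C (4 : ℝ) : ℝ[X]) = 4 from map_ofNat C 4]
    ring
  have h := congrArg (eval t) (iterate_derivative_comp_linear ((X ^ 2 - 1 : ℝ[X]) ^ n) n)
  rw [hw, iterate_derivative_C_mul] at h
  simp only [eval_mul, eval_C, eval_comp, eval_pow, eval_sub, eval_X, eval_one, eval_ofNat] at h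
  rw [legendreMonic_eq_eval, mul_assoc]
  congr 1
  have h4 : (4 : ℝ) ^ n = 2 ^ n * 2 ^ n := by rw [← mul_pow]; norm_num
  rw [h4, mul_assoc] at h
  exact (mul_left_cancel₀ (by positivity) h).symm

lemma moment (m n : ℕ) :
    ∫ t in (0 : ℝ)..1, t ^ m * legendreMonic n (2 * t - 1) =
      2 ^ n * (n.factorial : ℝ) ^ 2 / (2 * n).factorial *
        ((m.descFactorial n : ℝ) * m.factorial / (m + n + 1).factorial) := by
  -- Below order `n`, derivatives of `(X(X-1))^n` keep a factor `X(X-1)`: no boundary terms.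
  have hdvd : ∀ l < n, (X * (X - 1) : ℝ[X]) ∣ derivative^[l] ((X * (X - 1) : ℝ[X]) ^ n) :=
    fun l hl => (dvd_pow_self _ (by omega)).trans (pow_sub_dvd_iterate_derivative_pow _ n l)
  have hparts := integral_mul_iterate_derivative ((X * (X - 1) : ℝ[X]) ^ n) n
    (fun l hl => by obtain ⟨r, hr⟩ := hdvd l hl; rw [hr]; simp)
    (fun l hl => by obtain ⟨r, hr⟩ := hdvd l hl; rw [hr]; simp) (X ^ m)
  have hL : (fun t : ℝ => t ^ m * legendreMonic n (2 * t - 1)) = fun t =>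
      (((n.factorial : ℝ) / (2 * n).factorial) * 2 ^ n) *
        ((X ^ m : ℝ[X]).eval t * (derivative^[n] ((X * (X - 1) : ℝ[X]) ^ n)).eval t) := by
    funext t
    rw [legendreMonic_shifted]
    simp only [eval_pow, eval_X]
    ring
  rw [hL, intervalIntegral.integral_const_mul, hparts, iterate_derivative_X_pow_eq_C_mul]
  rcases lt_or_ge m n with hmn | hmn
  · simp [Nat.descFactorial_eq_zero_iff_lt.2 hmn]
  · have hR : (fun t : ℝ => eval t (C (m.descFactorial n : ℝ) * X ^ (m - n)) *
        eval t ((X * (X - 1) : ℝ[X]) ^ n)) =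
        fun t => ((m.descFactorial n : ℝ) * (-1) ^ n) * (t ^ m * (1 - t) ^ n) := by
      funext t
      simp only [eval_mul, eval_C, eval_pow, eval_X, eval_sub, eval_one]
      rw [← Nat.sub_add_cancel hmn, pow_add, show t - 1 = -1 * (1 - t) by ring, mul_pow, mul_pow,
        Nat.sub_add_cancel hmn]
      ring
    rw [hR, intervalIntegral.integral_const_mul, integral_pow_mul_one_sub_pow]
    have s : ((-1 : ℝ) ^ n) * (-1) ^ n = 1 := by rw [← mul_pow]; simp
    linear_combination ((n.factorial : ℝ) / (2 * n).factorial) * 2 ^ n * (m.descFactorial n : ℝ) *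
      ((m.factorial : ℝ) * n.factorial / (m + n + 1).factorial) * s

/-! ### The series -/

lemma alpertI_even_eq_sum (i n : ℕ) :
    alpertI (2 * i) n = ∑ k ∈ Finset.range (i + 1), legCoeff i k *
      ∫ t in (0 : ℝ)..1, t ^ (2 * (i - k)) * legendreMonic n (2 * t - 1) := by
  have hc : Continuous fun t : ℝ => legendreMonic n (2 * t - 1) := by
    simp only [legendreMonic_shifted]
    fun_prop
  unfold alpertI
  simp only [legendreMonic_even, Finset.sum_mul, mul_assoc]
  rw [intervalIntegral.integral_finsetSum
    (fun k _ => Continuous.intervalIntegrable (by fun_prop) _ _)]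
  simp only [intervalIntegral.integral_const_mul]

/-- Termwise comparison of the two sums. -/
lemma term_eq (i j k : ℕ) (h : j + k ≤ i) :
    legCoeff i k * (2 ^ (2 * j) * ((2 * j).factorial : ℝ) ^ 2 / (2 * (2 * j)).factorial *
        (((2 * (i - k)).descFactorial (2 * j) : ℝ) * (2 * (i - k)).factorial /
          (2 * (i - k) + 2 * j + 1).factorial)) =
      (2 : ℝ) ^ (2 * (j : ℤ) - 1) *
        (poch (-(i : ℝ)) j * poch (-(i : ℝ) + 1 / 2) j * (2 * j).factorial /
          (poch ((i : ℝ) + 1 / 2) (j + 1) * poch ((i : ℝ) + 1) j * poch (2 * j + 1) (2 * j))) *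
          (poch (-((i : ℝ) - j)) k * poch (-(i : ℝ) + j + 1 / 2) k *
              poch (-(i : ℝ) - j - 1 / 2) k * poch (-(i : ℝ) - j) k /
            (poch (-2 * i + 1 / 2) k * poch (-(i : ℝ)) k * poch (-(i : ℝ) + 1 / 2) k *
              k.factorial)) := by
  have hz : (2 : ℝ) ^ (2 * (j : ℤ) - 1) = 2 ^ (2 * j) / 2 := by
    rw [zpow_sub_one₀ (by norm_num), div_eq_mul_inv]
    norm_cast
  have h4 : (4 : ℝ) ^ j = 2 ^ (2 * j) := by rw [pow_mul]; norm_num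
  rw [descFactorial_two_mul (i - k) j (by omega), factorial_two_mul, two_mul (2 * j),
    factorial_eq_poch (2 * j), hz, legCoeff, Nat.cast_sub (by omega), h4, pow_succ _ (2 * j)]
  -- Even and odd factors of the falling factorial.
  have a1 := poch_shift (-(i : ℝ)) j k
  have a2 := poch_shift (-(i : ℝ) + 1 / 2) j k
  -- Odd and even factors of the denominator.
  have b1 := poch_reflect ((i : ℝ) + 1 / 2) (j + 1) k
  have b2 := poch_reflect ((i : ℝ) + 1) j k
  rw [show -(i : ℝ) + k = -((i : ℝ) - k) by ring,
    show -(i : ℝ) + j = -((i : ℝ) - j) by ring] at a1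
  rw [show -(i : ℝ) + 1 / 2 + k = -((i : ℝ) - k) + 1 / 2 by ring,
    show -(i : ℝ) + 1 / 2 + j = -(i : ℝ) + j + 1 / 2 by ring] at a2
  rw [show (i : ℝ) + 1 / 2 - k = (i : ℝ) - k + 1 / 2 by ring,
    show 1 - ((i : ℝ) + 1 / 2) - ((j + 1 : ℕ) : ℝ) = -(i : ℝ) - j - 1 / 2 by push_cast; ring,
    show 1 - ((i : ℝ) + 1 / 2) = -(i : ℝ) + 1 / 2 by ring] at b1
  rw [show (i : ℝ) + 1 - k = (i : ℝ) - k + 1 by ring,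
    show 1 - ((i : ℝ) + 1) - j = -(i : ℝ) - j by ring,
    show 1 - ((i : ℝ) + 1) = -(i : ℝ) by ring] at b2
  have hik : (0 : ℝ) ≤ (i : ℝ) - k := by
    rw [sub_nonneg]; exact_mod_cast (by omega : k ≤ i)
  have n1 : poch (-(i : ℝ)) k ≠ 0 := poch_neg_ne_zero (by omega)
  have n2 : poch (-(i : ℝ) + 1 / 2) k ≠ 0 := by
    simpa using poch_half_ne_zero (-(i : ℤ)) k
  have n3 : poch (-2 * (i : ℝ) + 1 / 2) k ≠ 0 := by
    simpa using poch_half_ne_zero (-2 * (i : ℤ)) k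
  have n4 : poch ((i : ℝ) - k + 1 / 2) (j + 1) ≠ 0 := (poch_pos (by linarith) _).ne'
  have n5 : poch ((i : ℝ) - k + 1) j ≠ 0 := (poch_pos (by linarith) _).ne'
  have n6 : poch ((i : ℝ) + 1 / 2) (j + 1) ≠ 0 := (poch_pos (by positivity) _).ne'
  have n7 : poch ((i : ℝ) + 1) j ≠ 0 := (poch_pos (by positivity) _).ne'
  have n8 : poch (2 * (j : ℝ) + 1) (2 * j) ≠ 0 := (poch_pos (by positivity) _).ne'
  have f1 : ((2 * (i - k)).factorial : ℝ) ≠ 0 := by positivity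
  have f2 : ((2 * j).factorial : ℝ) ≠ 0 := by positivity
  have f3 : (k.factorial : ℝ) ≠ 0 := by positivity
  rw [show (((2 * j : ℕ) : ℝ)) = 2 * (j : ℝ) by push_cast; ring]
  rw [← eq_div_iff n1] at a1
  rw [← eq_div_iff n2] at a2
  rw [mul_comm, ← eq_div_iff n4] at b1
  rw [mul_comm, ← eq_div_iff n5] at b2
  rw [a1, a2, b1, b2]
  -- The arguments of the Pochhammer symbols play no further role; hiding them keeps
  -- `field_simp` from normalizing them.
  generalize poch (-(i : ℝ) + 1 / 2) k = A at *
  generalize poch (-2 * (i : ℝ) + 1 / 2) k = B at *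
  generalize poch ((i : ℝ) - k + 1 / 2) (j + 1) = D at *
  generalize poch ((i : ℝ) + 1 / 2) (j + 1) = E at *
  generalize poch (-(i : ℝ) + j + 1 / 2) k = F at *
  generalize poch (-(i : ℝ) + 1 / 2) j = G at *
  field_simp

theorem alpertI_even_even (i j : ℕ) (hij : j ≤ i) :
    alpertI (2 * i) (2 * j) =
      (2 : ℝ) ^ (2 * (j : ℤ) - 1) *
        (poch (-(i : ℝ)) j * poch (-(i : ℝ) + 1 / 2) j * (2 * j).factorial /
          (poch ((i : ℝ) + 1 / 2) (j + 1) * poch ((i : ℝ) + 1) j * poch (2 * j + 1) (2 * j))) *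
        ∑ k ∈ Finset.range (i - j + 1),
          poch (-((i : ℝ) - j)) k * poch (-(i : ℝ) + j + 1 / 2) k *
              poch (-(i : ℝ) - j - 1 / 2) k * poch (-(i : ℝ) - j) k /
            (poch (-2 * i + 1 / 2) k * poch (-(i : ℝ)) k * poch (-(i : ℝ) + 1 / 2) k *
              k.factorial) := by
  rw [alpertI_even_eq_sum, Finset.mul_sum]
  symm
  refine Finset.sum_subset_zero_on_sdiff (Finset.range_mono (by omega)) ?_ ?_
  · intro k hk
    simp only [Finset.mem_sdiff, Finset.mem_range] at hk
    rw [moment, Nat.descFactorial_eq_zero_iff_lt.2 (by omega)]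
    simp
  · intro k hk
    have hk' := Finset.mem_range.1 hk
    rw [moment, term_eq i j k (by omega)]
end
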